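/- arXiv:1408.6036 — 7 statements merged into one kernel-verified Lean document; each statement's English description precedes it below -/
import Mathlib

section
/- Let c : [0, π] → ℝⁿ be a twice continuously differentiable curve and define c̄(t) := c(0)·cos t + ċ(0)·sin t, so that c̄'(t) = −c(0)·sin t + ċ(0)·cos t. Then for every t ∈ [0, π], √(‖c(t) − c̄(t)‖² + ‖ċ(t) − c̄'(t)‖²) ≤ e^π · ∫₀^π e^{−θ} ‖c̈(θ) + c(θ)‖ dθ. In particular ‖c(t) − c̄(t)‖ ≤ e^π · ∫₀^π e^{−θ} ‖c̈(θ) + c(θ)‖ dθ for all t ∈ [0, π]. -/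
open Real

/-!
Let `x` be the difference of the curve and its comparison curve. It satisfies `x'' + x = f`, where
`f := c'' + c`, and it starts at rest at the origin. Rotating phase space `E × E` by the angle `t`
undoes the free oscillation: the rotated phase `(x, x')` has velocity of norm exactly `‖f‖`.
Rotations preserve the norm, so `‖(x t, x' t)‖ ≤ ∫₀ᵗ ‖f‖`, and `1 ≤ exp (T - θ)` inserts the weight.
-/

open Set MeasureTheory intervalIntegral WithLp

section PhaseSpace

variable {E : Type*} [NormedAddCommGroup E] [InnerProductSpace ℝ E]

/-- The rotation by the angle `θ` of the phase space `E × E`, carrying its Euclidean norm, whose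
points are pairs (position, velocity). The sign is the one for which it is inverse to the flow of
the harmonic oscillator `x'' = -x`. -/
noncomputable def phaseRotation (θ : ℝ) (z : WithLp 2 (E × E)) : WithLp 2 (E × E) :=
  toLp 2 (cos θ • z.fst - sin θ • z.snd, sin θ • z.fst + cos θ • z.snd)

theorem norm_phaseRotation (θ : ℝ) (z : WithLp 2 (E × E)) : ‖phaseRotation θ z‖ = ‖z‖ := by
  rw [← sq_eq_sq₀ (norm_nonneg _) (norm_nonneg _), prod_norm_sq_eq_of_L2, prod_norm_sq_eq_of_L2]
  simp only [phaseRotation, toLp_fst, toLp_snd, norm_sub_sq_real, norm_add_sq_real, norm_smul,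
    mul_pow, norm_eq_abs, sq_abs, real_inner_smul_left, real_inner_smul_right]
  linear_combination (‖z.fst‖ ^ 2 + ‖z.snd‖ ^ 2) * sin_sq_add_cos_sq θ

theorem hasDerivWithinAt_phaseRotation {x x' : ℝ → E} {x'' : E} {s : Set ℝ} {t : ℝ}
    (hx : HasDerivWithinAt x (x' t) s t) (hx' : HasDerivWithinAt x' x'' s t) :
    HasDerivWithinAt (fun τ ↦ phaseRotation τ (toLp 2 (x τ, x' τ)))
      (phaseRotation t (toLp 2 (0, x'' + x t))) s t := by
  have hcos := (hasDerivAt_cos t).hasDerivWithinAt (s := s)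
  have hsin := (hasDerivAt_sin t).hasDerivWithinAt (s := s)
  have hpair := ((hcos.smul hx).sub (hsin.smul hx')).prodMk ((hsin.smul hx).add (hcos.smul hx'))
  have htoLp := (prodContinuousLinearEquiv 2 ℝ E E).symm.hasFDerivAt.comp_hasDerivWithinAt t hpair
  refine htoLp.congr_deriv (congrArg (toLp 2) (Prod.ext ?_ ?_)) <;>
  · dsimp only [toLp_fst, toLp_snd]
    module

theorem norm_phase_le_add_integral {x x' x'' : ℝ → E} {a b : ℝ} (hab : a ≤ b)
    (hx : ∀ t ∈ Icc a b, HasDerivWithinAt x (x' t) (Icc a b) t)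
    (hx' : ∀ t ∈ Icc a b, HasDerivWithinAt x' (x'' t) (Icc a b) t)
    (hforce : IntervalIntegrable (fun t ↦ ‖x'' t + x t‖) volume a b) :
    ‖toLp 2 (x b, x' b)‖ ≤ ‖toLp 2 (x a, x' a)‖ + ∫ t in a..b, ‖x'' t + x t‖ := by
  let P (t : ℝ) : WithLp 2 (E × E) := phaseRotation t (toLp 2 (x t, x' t))
  have hP : ∀ t ∈ Icc a b,
      HasDerivWithinAt P (phaseRotation t (toLp 2 (0, x'' t + x t))) (Icc a b) t :=
    fun t ht ↦ hasDerivWithinAt_phaseRotation (hx t ht) (hx' t ht)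
  have hP_interior : ∀ t ∈ Ioo a b,
      HasDerivAt P (phaseRotation t (toLp 2 (0, x'' t + x t))) t :=
    fun t ht ↦ (hP t (Ioo_subset_Icc_self ht)).hasDerivAt (Icc_mem_nhds ht.1 ht.2)
  have hspeed : ∀ t ∈ Ioo a b, ‖deriv P t‖ ≤ ‖x'' t + x t‖ := fun t ht ↦ by
    rw [(hP_interior t ht).deriv, norm_phaseRotation, norm_toLp_snd]
  have hdisplacement : ‖P b - P a‖ ≤ ∫ t in a..b, ‖x'' t + x t‖ :=
    norm_sub_le_integral_of_norm_deriv_le_of_le hab (fun t ht ↦ (hP t ht).continuousWithinAt)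
      (fun t ht ↦ (hP_interior t ht).differentiableAt.differentiableWithinAt)
      (.of_forall hspeed) hforce
  calc ‖toLp 2 (x b, x' b)‖ = ‖P b‖ := (norm_phaseRotation _ _).symm
    _ ≤ ‖P a‖ + ‖P b - P a‖ := norm_le_norm_add_norm_sub' _ _
    _ ≤ ‖toLp 2 (x a, x' a)‖ + ∫ t in a..b, ‖x'' t + x t‖ :=
      add_le_add (norm_phaseRotation _ _).le hdisplacement

end PhaseSpace

section Comparison

variable {F : Type*} [NormedAddCommGroup F] [NormedSpace ℝ F]

theorem hasDerivAt_cos_smul_add_sin_smul (u v : F) (t : ℝ) :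
    HasDerivAt (fun s ↦ cos s • u + sin s • v) (-sin t • u + cos t • v) t :=
  ((hasDerivAt_cos t).smul_const u).add ((hasDerivAt_sin t).smul_const v)

theorem hasDerivAt_neg_sin_smul_add_cos_smul (u v : F) (t : ℝ) :
    HasDerivAt (fun s ↦ -sin s • u + cos s • v) (-(cos t • u + sin t • v)) t :=
  (((hasDerivAt_sin t).neg.smul_const u).add ((hasDerivAt_cos t).smul_const v)).congr_deriv
    (by module)

variable {E : Type*} [NormedAddCommGroup E] [InnerProductSpace ℝ E]

theorem sqrt_norm_sub_comparison_sq_le_integral {c c' c'' : ℝ → E} {t : ℝ} (ht : 0 ≤ t)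
    (hc' : ∀ s ∈ Icc 0 t, HasDerivWithinAt c (c' s) (Icc 0 t) s)
    (hc'' : ∀ s ∈ Icc 0 t, HasDerivWithinAt c' (c'' s) (Icc 0 t) s)
    (hforce : IntervalIntegrable (fun s ↦ ‖c'' s + c s‖) volume 0 t) :
    √(‖c t - (cos t • c 0 + sin t • c' 0)‖ ^ 2 + ‖c' t - (-sin t • c 0 + cos t • c' 0)‖ ^ 2) ≤
      ∫ s in 0..t, ‖c'' s + c s‖ := by
  let x (s : ℝ) : E := c s - (cos s • c 0 + sin s • c' 0)
  let x' (s : ℝ) : E := c' s - (-sin s • c 0 + cos s • c' 0)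
  let x'' (s : ℝ) : E := c'' s - -(cos s • c 0 + sin s • c' 0)
  have hforcing (s : ℝ) : x'' s + x s = c'' s + c s := by
    simp only [x, x'']
    abel
  have hphase₀ : toLp 2 (x 0, x' 0) = 0 := by simp [x, x']
  have hestimate := norm_phase_le_add_integral (x := x) (x' := x') (x'' := x'') ht
    (fun s hs ↦ (hc' s hs).sub (hasDerivAt_cos_smul_add_sin_smul _ _ s).hasDerivWithinAt)
    (fun s hs ↦ (hc'' s hs).sub (hasDerivAt_neg_sin_smul_add_cos_smul _ _ s).hasDerivWithinAt)
    (by simpa only [hforcing] using hforce)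
  simpa only [hforcing, hphase₀, norm_zero, zero_add, prod_norm_eq_of_L2, toLp_fst, toLp_snd]
    using hestimate

theorem integral_le_exp_mul_integral_exp_neg_mul {g : ℝ → ℝ} {a b : ℝ} (hab : a ≤ b)
    (hg : IntervalIntegrable g volume a b) (hg_nonneg : ∀ θ ∈ Icc a b, 0 ≤ g θ) :
    ∫ θ in a..b, g θ ≤ exp b * ∫ θ in a..b, exp (-θ) * g θ := by
  have hweighted : IntervalIntegrable (fun θ ↦ exp (-θ) * g θ) volume a b :=
    hg.continuousOn_mul (by fun_prop)
  rw [← intervalIntegral.integral_const_mul]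
  refine integral_mono_on hab hg (hweighted.const_mul _) fun θ hθ ↦ ?_
  calc g θ ≤ exp (b - θ) * g θ :=
        le_mul_of_one_le_left (hg_nonneg θ hθ) (one_le_exp (sub_nonneg.2 hθ.2))
    _ = exp b * (exp (-θ) * g θ) := by rw [sub_eq_add_neg, exp_add, mul_assoc]

theorem stmt_2_general {T : ℝ} (c c' c'' : ℝ → E)
    (hc' : ∀ t ∈ Icc 0 T, HasDerivWithinAt c (c' t) (Icc 0 T) t)
    (hc'' : ∀ t ∈ Icc 0 T, HasDerivWithinAt c' (c'' t) (Icc 0 T) t)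
    (hforce : IntervalIntegrable (fun θ ↦ ‖c'' θ + c θ‖) volume 0 T) :
    ∀ t ∈ Icc 0 T,
      √(‖c t - (cos t • c 0 + sin t • c' 0)‖ ^ 2 + ‖c' t - (-sin t • c 0 + cos t • c' 0)‖ ^ 2) ≤
        exp T * ∫ θ in 0..T, exp (-θ) * ‖c'' θ + c θ‖ ∧
      ‖c t - (cos t • c 0 + sin t • c' 0)‖ ≤
        exp T * ∫ θ in 0..T, exp (-θ) * ‖c'' θ + c θ‖ := by
  intro t ht
  have hT : 0 ≤ T := ht.1.trans ht.2
  have hsub : Icc 0 t ⊆ Icc 0 T := Icc_subset_Icc_right ht.2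
  have hphase := calc
    √(‖c t - (cos t • c 0 + sin t • c' 0)‖ ^ 2 + ‖c' t - (-sin t • c 0 + cos t • c' 0)‖ ^ 2)
    _ ≤ ∫ θ in 0..t, ‖c'' θ + c θ‖ :=
      sqrt_norm_sub_comparison_sq_le_integral ht.1 (fun s hs ↦ (hc' s (hsub hs)).mono hsub)
        (fun s hs ↦ (hc'' s (hsub hs)).mono hsub)
        (hforce.mono_set (by rwa [uIcc_of_le ht.1, uIcc_of_le hT]))
    _ ≤ ∫ θ in 0..T, ‖c'' θ + c θ‖ :=
      integral_mono_interval le_rfl ht.1 ht.2 (.of_forall fun _ ↦ norm_nonneg _) hforce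
    _ ≤ exp T * ∫ θ in 0..T, exp (-θ) * ‖c'' θ + c θ‖ :=
      integral_le_exp_mul_integral_exp_neg_mul hT hforce fun _ _ ↦ norm_nonneg _
  exact ⟨hphase, (le_sqrt_of_sq_le (le_add_of_nonneg_right (sq_nonneg _))).trans hphase⟩

end Comparison

theorem stmt_2 {n : ℕ} (c c' c'' : ℝ → EuclideanSpace ℝ (Fin n))
    (hc' : ∀ t ∈ Set.Icc (0:ℝ) π, HasDerivWithinAt c (c' t) (Set.Icc 0 π) t)
    (hc'' : ∀ t ∈ Set.Icc (0:ℝ) π, HasDerivWithinAt c' (c'' t) (Set.Icc 0 π) t)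
    (hcont : ContinuousOn c'' (Set.Icc 0 π)) :
    ∀ t ∈ Set.Icc (0:ℝ) π,
      (Real.sqrt (‖c t - (Real.cos t • c 0 + Real.sin t • c' 0)‖ ^ 2 +
          ‖c' t - (-Real.sin t • c 0 + Real.cos t • c' 0)‖ ^ 2) ≤
        Real.exp π * ∫ θ in (0:ℝ)..π, Real.exp (-θ) * ‖c'' θ + c θ‖) ∧
      ‖c t - (Real.cos t • c 0 + Real.sin t • c' 0)‖ ≤
        Real.exp π * ∫ θ in (0:ℝ)..π, Real.exp (-θ) * ‖c'' θ + c θ‖ :=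
  have hc : ContinuousOn c (Icc 0 π) := fun t ht ↦ (hc' t ht).continuousWithinAt
  stmt_2_general c c' c'' hc' hc'' ((hcont.add hc).norm.intervalIntegrable_of_Icc pi_nonneg)
end

section
/- Let α = 1 − 1/√2 and let c : [0, π] → ℝⁿ be a differentiable curve with ‖c(t)‖ = 1 for all t ∈ [0, π], ⟨c(0), ċ(0)⟩ = 0, and ‖c(t) − c̄(t)‖ ≤ α for all t ∈ [0, π]. Then ⟨c̄(θ), c(θ)⟩ > 0 for every θ ∈ [0, π]. -/
open Real
open scoped RealInnerProductSpace

/-! The claim is pointwise in `θ`: on the sphere of radius `‖y‖` about `0`, the vector `x` joins the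
interior point `y - x` to `y`, so it makes an acute angle with the outer normal `y`. -/

theorem stmt_6_general {E : Type*} [NormedAddCommGroup E] [InnerProductSpace ℝ E] {x y : E}
    (h : ‖y - x‖ < ‖y‖) : 0 < ⟪x, y⟫ := by
  let s : EuclideanGeometry.Sphere E := ⟨0, ‖y‖⟩
  have hy : y ∈ s := EuclideanGeometry.mem_sphere.mpr (dist_zero_right y)
  have hyx : dist (y - x) s.center < s.radius := (dist_zero_right (y - x)).trans_lt h
  simpa only [s, vsub_eq_sub, sub_sub_cancel, sub_zero] using
    EuclideanGeometry.inner_pos_of_dist_lt_radius hy hyx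

theorem stmt_6 {n : ℕ} (c c' : ℝ → EuclideanSpace ℝ (Fin n))
    (hd : ∀ t ∈ Set.Icc (0:ℝ) π, HasDerivWithinAt c (c' t) (Set.Icc 0 π) t)
    (hunit : ∀ t ∈ Set.Icc (0:ℝ) π, ‖c t‖ = 1)
    (horth : ⟪c 0, c' 0⟫ = 0)
    (hclose : ∀ t ∈ Set.Icc (0:ℝ) π,
      ‖c t - (Real.cos t • c 0 + Real.sin t • c' 0)‖ ≤ 1 - 1 / Real.sqrt 2) :
    ∀ θ ∈ Set.Icc (0:ℝ) π,
      0 < ⟪Real.cos θ • c 0 + Real.sin θ • c' 0, c θ⟫ := by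
  have radius_lt_one : 1 - 1 / √2 < 1 := sub_lt_self 1 (by positivity)
  exact fun θ hθ ↦ stmt_6_general <|
    ((hclose θ hθ).trans_lt radius_lt_one).trans_eq (hunit θ hθ).symm
end

section
/- Let c : [0, π] → ℝⁿ be a twice continuously differentiable curve with ‖c(t)‖ = 1 for all t ∈ [0, π], and suppose ∫₀^π e^{−θ} ‖c̈(θ) + c(θ)‖ dθ ≤ e^{−π} · (1 − 1/√2). Then ⟨c̄(t), c(t)⟩ > 0 for every t ∈ [0, π]. -/
open Real
open scoped RealInnerProductSpace

/-!
The solution operators of `x'' = -x` are rotations of phase space. Transporting the state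
`(c θ, c' θ)` of the curve to time `t` along that equation gives a path from the comparison point
`c̄ t` (at `θ = 0`) to `c t` (at `θ = t`), whose velocity `sin (t - θ) • (c'' θ + c θ)` involves the
curve only through its deviation from being a solution. Hence
`‖c t - c̄ t‖ ≤ ∫₀ᵗ ‖c'' + c‖`, which the weighted bound forces below `1 = ‖c t‖` because
`e^(-θ) ≥ e^(-π)`; and a point closer to `c t` than the origin is has positive inner product
with `c t`.
-/

section

open Set MeasureTheory

section NormedSpace

variable {E : Type*} [NormedAddCommGroup E] [NormedSpace ℝ E]

/-- The position at time `t` of the solution of `x'' = -x` with initial position `p` and initial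
velocity `v`. The comparison curve is `c̄ t = harmonicFlow t (c 0) (c' 0)`. -/
noncomputable def harmonicFlow (t : ℝ) (p v : E) : E :=
  cos t • p + sin t • v

@[simp]
lemma harmonicFlow_zero (p v : E) : harmonicFlow 0 p v = p := by
  simp [harmonicFlow]

variable {c c' c'' : ℝ → E}

lemma hasDerivWithinAt_harmonicFlow_sub {s : Set ℝ} {t θ : ℝ} {a : E}
    (hc : HasDerivWithinAt c (c' θ) s θ) (hc' : HasDerivWithinAt c' a s θ) :
    HasDerivWithinAt (fun τ ↦ harmonicFlow (t - τ) (c τ) (c' τ)) (sin (t - θ) • (a + c θ)) s θ := by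
  have hsub : HasDerivWithinAt (t - ·) (-1) s θ := (hasDerivWithinAt_id θ s).const_sub t
  exact ((hsub.cos.smul hc).add (hsub.sin.smul hc')).congr_deriv (by module)

theorem norm_sub_harmonicFlow_le_integral {a b : ℝ} (hab : a ≤ b)
    (hc : ∀ θ ∈ Icc a b, HasDerivWithinAt c (c' θ) (Icc a b) θ)
    (hc' : ∀ θ ∈ Icc a b, HasDerivWithinAt c' (c'' θ) (Icc a b) θ)
    (hint : IntervalIntegrable (fun θ ↦ ‖c'' θ + c θ‖) volume a b) :
    ‖c b - harmonicFlow (b - a) (c a) (c' a)‖ ≤ ∫ θ in a..b, ‖c'' θ + c θ‖ := by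
  set transport : ℝ → E := fun θ ↦ harmonicFlow (b - θ) (c θ) (c' θ) with htransport
  have hderiv (θ : ℝ) (hθ : θ ∈ Icc a b) :
      HasDerivWithinAt transport (sin (b - θ) • (c'' θ + c θ)) (Icc a b) θ :=
    hasDerivWithinAt_harmonicFlow_sub (hc θ hθ) (hc' θ hθ)
  have hderivAt (θ : ℝ) (hθ : θ ∈ Ioo a b) :
      HasDerivAt transport (sin (b - θ) • (c'' θ + c θ)) θ :=
    (hderiv θ (Ioo_subset_Icc_self hθ)).hasDerivAt (Icc_mem_nhds hθ.1 hθ.2)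
  have hspeed (θ : ℝ) (hθ : θ ∈ Ioo a b) : ‖deriv transport θ‖ ≤ ‖c'' θ + c θ‖ := by
    rw [(hderivAt θ hθ).deriv, norm_smul]
    exact mul_le_of_le_one_left (norm_nonneg _) (abs_sin_le_one _)
  have hdisplacement : ‖transport b - transport a‖ ≤ ∫ θ in a..b, ‖c'' θ + c θ‖ :=
    norm_sub_le_integral_of_norm_deriv_le_of_le hab (HasDerivWithinAt.continuousOn hderiv)
      (fun θ hθ ↦ (hderivAt θ hθ).differentiableAt.differentiableWithinAt)
      (.of_forall hspeed) hint
  simpa only [htransport, sub_self, harmonicFlow_zero] using hdisplacement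

end NormedSpace

lemma const_mul_integral_le_integral_mul {μ : Measure ℝ} {w g : ℝ → ℝ} {a b m : ℝ} (hab : a ≤ b)
    (hw : ∀ θ ∈ Icc a b, m ≤ w θ) (hg : ∀ θ ∈ Icc a b, 0 ≤ g θ)
    (hg_int : IntervalIntegrable g μ a b)
    (hwg_int : IntervalIntegrable (fun θ ↦ w θ * g θ) μ a b) :
    m * ∫ θ in a..b, g θ ∂μ ≤ ∫ θ in a..b, w θ * g θ ∂μ := by
  rw [← intervalIntegral.integral_const_mul]
  exact intervalIntegral.integral_mono_on hab (hg_int.const_mul m) hwg_int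
    fun θ hθ ↦ mul_le_mul_of_nonneg_right (hw θ hθ) (hg θ hθ)

lemma exp_neg_mul_integral_le_integral_exp_neg_mul {g : ℝ → ℝ} {a t b : ℝ} (ht : t ∈ Icc a b)
    (hg : ∀ θ, 0 ≤ g θ) (hg_int : IntervalIntegrable g volume a b) :
    exp (-b) * ∫ θ in a..t, g θ ≤ ∫ θ in a..b, exp (-θ) * g θ :=
  calc
    exp (-b) * ∫ θ in a..t, g θ ≤ exp (-b) * ∫ θ in a..b, g θ := by
      gcongr
      exact intervalIntegral.integral_mono_interval le_rfl ht.1 ht.2 (.of_forall hg) hg_int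
    _ ≤ ∫ θ in a..b, exp (-θ) * g θ :=
      const_mul_integral_le_integral_mul (ht.1.trans ht.2)
        (fun θ hθ ↦ exp_le_exp.mpr (neg_le_neg hθ.2)) (fun θ _ ↦ hg θ) hg_int
        (hg_int.continuousOn_mul (by fun_prop))

section InnerProductSpace

variable {E : Type*} [NormedAddCommGroup E] [InnerProductSpace ℝ E]

lemma inner_pos_of_norm_sub_lt {x y : E} (h : ‖y - x‖ < ‖y‖) : 0 < ⟪x, y⟫ := by
  simpa using EuclideanGeometry.inner_pos_of_dist_lt_radius (s := ⟨0, ‖y‖⟩) (p₁ := y)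
    (p₂ := y - x) (by simp [EuclideanGeometry.mem_sphere]) (by simpa using h)

theorem stmt_7_general {c c' c'' : ℝ → E} {t T : ℝ} (ht : t ∈ Icc 0 T)
    (hc' : ∀ θ ∈ Icc 0 T, HasDerivWithinAt c (c' θ) (Icc 0 T) θ)
    (hc'' : ∀ θ ∈ Icc 0 T, HasDerivWithinAt c' (c'' θ) (Icc 0 T) θ)
    (hdev : IntervalIntegrable (fun θ ↦ ‖c'' θ + c θ‖) volume 0 T)
    (hint : ∫ θ in 0..T, exp (-θ) * ‖c'' θ + c θ‖ < exp (-T) * ‖c t‖) :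
    0 < ⟪cos t • c 0 + sin t • c' 0, c t⟫ := by
  have hsub : Icc 0 t ⊆ Icc 0 T := Icc_subset_Icc_right ht.2
  have hdeviation : ∫ θ in 0..t, ‖c'' θ + c θ‖ < ‖c t‖ :=
    lt_of_mul_lt_mul_left
      ((exp_neg_mul_integral_le_integral_exp_neg_mul ht (fun _ ↦ norm_nonneg _) hdev).trans_lt hint)
      (exp_nonneg _)
  have hdist : ‖c t - harmonicFlow t (c 0) (c' 0)‖ ≤ ∫ θ in 0..t, ‖c'' θ + c θ‖ := by
    simpa only [sub_zero] using norm_sub_harmonicFlow_le_integral ht.1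
      (fun θ hθ ↦ (hc' θ (hsub hθ)).mono hsub) (fun θ hθ ↦ (hc'' θ (hsub hθ)).mono hsub)
      (hdev.mono_set (uIcc_subset_uIcc_left (Icc_subset_uIcc ht)))
  exact inner_pos_of_norm_sub_lt (hdist.trans_lt hdeviation)

end InnerProductSpace

end

theorem stmt_7 {n : ℕ} (c c' c'' : ℝ → EuclideanSpace ℝ (Fin n))
    (hc' : ∀ t ∈ Set.Icc (0:ℝ) π, HasDerivWithinAt c (c' t) (Set.Icc 0 π) t)
    (hc'' : ∀ t ∈ Set.Icc (0:ℝ) π, HasDerivWithinAt c' (c'' t) (Set.Icc 0 π) t)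
    (hcont : ContinuousOn c'' (Set.Icc 0 π))
    (hunit : ∀ t ∈ Set.Icc (0:ℝ) π, ‖c t‖ = 1)
    (hint : ∫ θ in (0:ℝ)..π, Real.exp (-θ) * ‖c'' θ + c θ‖ ≤
      Real.exp (-π) * (1 - 1 / Real.sqrt 2)) :
    ∀ t ∈ Set.Icc (0:ℝ) π,
      0 < ⟪Real.cos t • c 0 + Real.sin t • c' 0, c t⟫ := fun t ht ↦
  stmt_7_general ht hc' hc''
    ((hcont.add (HasDerivWithinAt.continuousOn hc')).norm.intervalIntegrable_of_Icc pi_nonneg)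
    (hint.trans_lt (by rw [hunit t ht]; gcongr; exact sub_lt_self 1 (by positivity)))
end

section
/- Let L ≥ 1 be a real number with L^{−2} ≥ 1 − ((√2 − 1)/(2(e^π − 1)))², and let c : [0, π] → ℝⁿ be a twice continuously differentiable curve such that ‖c(t)‖ = 1, ‖ċ(t)‖ ≥ L^{−1}, and ‖c̈(t)‖² ≤ L^{−2} + ((√2 − 1)/(2(e^π − 1)))² for all t ∈ [0, π]. Then ∫₀^π e^{−t} ‖c̈(t) + c(t)‖ dt ≤ e^{−π} · (1 − 1/√2). -/
open Real

open MeasureTheory Set Filter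
open scoped Topology RealInnerProductSpace

/-!
For a curve `c` on the sphere of radius `r`, differentiating `⟪c, c⟫ = r²` twice gives
`⟪c, c''⟫ = -‖c'‖²`, so that `‖c'' + c‖² = ‖c''‖² - 2‖c'‖² + r²`. Hence a lower bound on the speed
together with an upper bound on the acceleration makes `c` a pointwise approximate solution of the
great circle equation `c'' = -c`, and it remains to integrate that bound against `exp (-t)`. The
integrand is integrable because `c''` is a bounded pointwise limit of difference quotients of `c'`.
-/

section Measurability

variable {F : Type*} [NormedAddCommGroup F] [NormedSpace ℝ F] {f f' : ℝ → F}

theorem aestronglyMeasurable_of_ae_hasDerivAt {μ : Measure ℝ} (hf : Continuous f)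
    (hf' : ∀ᵐ t ∂μ, HasDerivAt f (f' t) t) : AEStronglyMeasurable f' μ := by
  let diffQuot (n : ℕ) (t : ℝ) : F := (n : ℝ) • (f (t + (n : ℝ)⁻¹) - f t)
  have hcont (n : ℕ) : Continuous (diffQuot n) := by fun_prop
  have hlim : ∀ᵐ t ∂μ, Tendsto (diffQuot · t) atTop (𝓝 (f' t)) := by
    filter_upwards [hf'] with t ht
    simpa [diffQuot] using ht.hasFDerivAt.lim 1
      (tendsto_norm_atTop_atTop.comp tendsto_natCast_atTop_atTop)
  exact aestronglyMeasurable_of_tendsto_ae atTop (fun n ↦ (hcont n).aestronglyMeasurable) hlim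

theorem intervalIntegrable_of_hasDerivWithinAt_of_norm_le {a b C : ℝ} (hab : a ≤ b)
    (hf : ∀ t ∈ Icc a b, HasDerivWithinAt f (f' t) (Icc a b) t)
    (hC : ∀ t ∈ Icc a b, ‖f' t‖ ≤ C) : IntervalIntegrable f' volume a b := by
  let g : ℝ → F := IccExtend hab ((Icc a b).domRestrict f)
  have hg : Continuous g :=
    (continuousOn_iff_continuous_domRestrict.1 fun t ht ↦ (hf t ht).continuousWithinAt).Icc_extend'
  have hg' (t : ℝ) (ht : t ∈ Ioo a b) : HasDerivAt g (f' t) t := by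
    have hmem : Icc a b ∈ 𝓝 t := Icc_mem_nhds ht.1 ht.2
    refine ((hf t (Ioo_subset_Icc_self ht)).hasDerivAt hmem).congr_of_eventuallyEq ?_
    filter_upwards [hmem] with x hx using IccExtend_of_mem hab _ hx
  rw [intervalIntegrable_iff_integrableOn_Ioo_of_le hab]
  refine .of_bound measure_Ioo_lt_top (aestronglyMeasurable_of_ae_hasDerivAt hg ?_) C ?_
  · exact (ae_restrict_mem measurableSet_Ioo).mono hg'
  · exact (ae_restrict_mem measurableSet_Ioo).mono fun t ht ↦ hC t (Ioo_subset_Icc_self ht)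

end Measurability

section SphericalCurve

variable {E : Type*} [NormedAddCommGroup E] [InnerProductSpace ℝ E]

theorem inner_add_inner_eq_zero_of_inner_eq_const {f g : ℝ → E} {f' g' : E} {s : Set ℝ} {t k : ℝ}
    (hs : UniqueDiffWithinAt ℝ s t) (ht : t ∈ s) (hf : HasDerivWithinAt f f' s t)
    (hg : HasDerivWithinAt g g' s t) (hk : ∀ x ∈ s, ⟪f x, g x⟫ = k) :
    ⟪f t, g'⟫ + ⟪f', g t⟫ = 0 :=
  hs.eq_deriv _ (hf.inner ℝ hg) ((hasDerivWithinAt_const t s k).congr hk (hk t ht))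

variable {c c' c'' : ℝ → E} {s : Set ℝ} {r t : ℝ}

theorem inner_deriv_eq_zero_of_norm_eq_const {v : E} (hs : UniqueDiffWithinAt ℝ s t) (ht : t ∈ s)
    (hc : HasDerivWithinAt c v s t) (hr : ∀ x ∈ s, ‖c x‖ = r) : ⟪c t, v⟫ = 0 := by
  have hsq (x : ℝ) (hx : x ∈ s) : ⟪c x, c x⟫ = r ^ 2 := by
    rw [real_inner_self_eq_norm_sq, hr x hx]
  have hsum := inner_add_inner_eq_zero_of_inner_eq_const hs ht hc hc hsq
  rw [real_inner_comm (c t) v] at hsum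
  linarith

theorem inner_second_deriv_eq_neg_norm_sq_of_norm_eq_const {a : E} (hs : UniqueDiffOn ℝ s)
    (ht : t ∈ s) (hc : ∀ x ∈ s, HasDerivWithinAt c (c' x) s x)
    (hc' : HasDerivWithinAt c' a s t) (hr : ∀ x ∈ s, ‖c x‖ = r) :
    ⟪c t, a⟫ = -‖c' t‖ ^ 2 := by
  have horth (x : ℝ) (hx : x ∈ s) : ⟪c x, c' x⟫ = 0 :=
    inner_deriv_eq_zero_of_norm_eq_const (hs x hx) hx (hc x hx) hr
  have hsum := inner_add_inner_eq_zero_of_inner_eq_const (hs t ht) ht (hc t ht) hc' horth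
  rw [real_inner_self_eq_norm_sq] at hsum
  linarith

theorem norm_second_deriv_add_self_sq_of_norm_eq_const {a : E} (hs : UniqueDiffOn ℝ s)
    (ht : t ∈ s) (hc : ∀ x ∈ s, HasDerivWithinAt c (c' x) s x)
    (hc' : HasDerivWithinAt c' a s t) (hr : ∀ x ∈ s, ‖c x‖ = r) :
    ‖a + c t‖ ^ 2 = ‖a‖ ^ 2 - 2 * ‖c' t‖ ^ 2 + r ^ 2 := by
  rw [norm_add_sq_real, real_inner_comm,
    inner_second_deriv_eq_neg_norm_sq_of_norm_eq_const hs ht hc hc' hr, hr t ht]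
  ring

theorem norm_second_deriv_add_self_le_sqrt_two_mul {a : E} {ℓ ε : ℝ} (hs : UniqueDiffOn ℝ s)
    (ht : t ∈ s) (hc : ∀ x ∈ s, HasDerivWithinAt c (c' x) s x)
    (hc' : HasDerivWithinAt c' a s t) (hr : ∀ x ∈ s, ‖c x‖ = r) (hε : 0 ≤ ε) (hℓ : 0 ≤ ℓ)
    (hrℓ : r ^ 2 - ε ^ 2 ≤ ℓ ^ 2) (hspeed : ℓ ≤ ‖c' t‖) (hacc : ‖a‖ ^ 2 ≤ ℓ ^ 2 + ε ^ 2) :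
    ‖a + c t‖ ≤ √2 * ε := by
  have hspeed_sq : ℓ ^ 2 ≤ ‖c' t‖ ^ 2 := pow_le_pow_left₀ hℓ hspeed 2
  refine le_of_sq_le_sq ?_ (by positivity)
  calc ‖a + c t‖ ^ 2 = ‖a‖ ^ 2 - 2 * ‖c' t‖ ^ 2 + r ^ 2 :=
        norm_second_deriv_add_self_sq_of_norm_eq_const hs ht hc hc' hr
    _ ≤ 2 * ε ^ 2 := by linarith
    _ = (√2 * ε) ^ 2 := by rw [mul_pow, sq_sqrt zero_le_two]

theorem intervalIntegrable_exp_neg_mul_norm_second_deriv_add_self {a b M : ℝ} (hab : a ≤ b)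
    (hc : ContinuousOn c (Icc a b))
    (hc' : ∀ t ∈ Icc a b, HasDerivWithinAt c' (c'' t) (Icc a b) t)
    (hacc : ∀ t ∈ Icc a b, ‖c'' t‖ ^ 2 ≤ M) :
    IntervalIntegrable (fun t ↦ exp (-t) * ‖c'' t + c t‖) volume a b := by
  have hc''_int : IntervalIntegrable c'' volume a b :=
    intervalIntegrable_of_hasDerivWithinAt_of_norm_le hab hc'
      fun t ht ↦ Real.le_sqrt_of_sq_le (hacc t ht)
  have hc_int : IntervalIntegrable c volume a b := hc.intervalIntegrable_of_Icc hab
  exact (hc''_int.add hc_int).norm.continuousOn_mul (by fun_prop)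

end SphericalCurve

theorem integral_exp_neg_mul_le_of_le_const {g : ℝ → ℝ} {a b C : ℝ} (hab : a ≤ b)
    (hint : IntervalIntegrable (fun t ↦ exp (-t) * g t) volume a b)
    (hg : ∀ t ∈ Icc a b, g t ≤ C) :
    ∫ t in a..b, exp (-t) * g t ≤ C * (exp (-a) - exp (-b)) :=
  calc ∫ t in a..b, exp (-t) * g t ≤ ∫ t in a..b, exp (-t) * C :=
        intervalIntegral.integral_mono_on hab hint
          (Continuous.intervalIntegrable (by fun_prop) _ _) fun t ht ↦ by gcongr; exact hg t ht
    _ = C * (exp (-a) - exp (-b)) := by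
        rw [intervalIntegral.integral_mul_const, intervalIntegral.integral_comp_neg (exp ·),
          integral_exp, mul_comm]

theorem sqrt_two_mul_div_mul_one_sub_exp_neg {x : ℝ} (hx : x ≠ 0) :
    √2 * ((√2 - 1) / (2 * (exp x - 1))) * (1 - exp (-x)) = exp (-x) * (1 - 1 / √2) := by
  have hexp : exp x - 1 ≠ 0 := sub_ne_zero.2 (exp_eq_one_iff x |>.not.2 hx)
  have hsqrt : √2 ^ 2 = 2 := sq_sqrt zero_le_two
  rw [exp_neg]
  field_simp
  linear_combination (√2 - 1) * hsqrt

theorem stmt_9_general {E : Type*} [NormedAddCommGroup E] [InnerProductSpace ℝ E] {L : ℝ}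
    (hL : 0 < L) (hL2 : L⁻¹ ^ 2 ≥ 1 - ((√2 - 1) / (2 * (exp π - 1))) ^ 2) {c c' c'' : ℝ → E}
    (hc' : ∀ t ∈ Icc 0 π, HasDerivWithinAt c (c' t) (Icc 0 π) t)
    (hc'' : ∀ t ∈ Icc 0 π, HasDerivWithinAt c' (c'' t) (Icc 0 π) t)
    (hunit : ∀ t ∈ Icc 0 π, ‖c t‖ = 1) (hd1 : ∀ t ∈ Icc 0 π, L⁻¹ ≤ ‖c' t‖)
    (hd2 : ∀ t ∈ Icc 0 π, ‖c'' t‖ ^ 2 ≤ L⁻¹ ^ 2 + ((√2 - 1) / (2 * (exp π - 1))) ^ 2) :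
    IntervalIntegrable (fun t ↦ exp (-t) * ‖c'' t + c t‖) volume 0 π ∧
      ∫ t in (0 : ℝ)..π, exp (-t) * ‖c'' t + c t‖ ≤ exp (-π) * (1 - 1 / √2) := by
  set ε : ℝ := (√2 - 1) / (2 * (exp π - 1)) with hε_def
  have hε : 0 ≤ ε := div_nonneg (sub_nonneg.2 (one_le_sqrt.2 one_le_two))
    (mul_nonneg zero_le_two (sub_nonneg.2 (one_le_exp pi_nonneg)))
  have hpointwise (t : ℝ) (ht : t ∈ Icc 0 π) : ‖c'' t + c t‖ ≤ √2 * ε :=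
    norm_second_deriv_add_self_le_sqrt_two_mul (uniqueDiffOn_Icc pi_pos) ht hc' (hc'' t ht) hunit
      hε (inv_nonneg.2 hL.le) (by simpa only [one_pow] using hL2) (hd1 t ht) (hd2 t ht)
  have hint := intervalIntegrable_exp_neg_mul_norm_second_deriv_add_self pi_nonneg
    (fun t ht ↦ (hc' t ht).continuousWithinAt) hc'' hd2
  refine ⟨hint, ?_⟩
  calc ∫ t in (0 : ℝ)..π, exp (-t) * ‖c'' t + c t‖ ≤ √2 * ε * (exp (-0) - exp (-π)) :=
        integral_exp_neg_mul_le_of_le_const pi_nonneg hint hpointwise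
    _ = exp (-π) * (1 - 1 / √2) := by
        rw [neg_zero, exp_zero, hε_def, sqrt_two_mul_div_mul_one_sub_exp_neg pi_ne_zero]

theorem stmt_9 {n : ℕ} (L : ℝ) (hL : 1 ≤ L)
    (hL2 : L⁻¹ ^ 2 ≥ 1 - ((Real.sqrt 2 - 1) / (2 * (Real.exp π - 1))) ^ 2)
    (c c' c'' : ℝ → EuclideanSpace ℝ (Fin n))
    (hc' : ∀ t ∈ Set.Icc (0:ℝ) π, HasDerivWithinAt c (c' t) (Set.Icc 0 π) t)
    (hc'' : ∀ t ∈ Set.Icc (0:ℝ) π, HasDerivWithinAt c' (c'' t) (Set.Icc 0 π) t)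
    (hcont : ContinuousOn c'' (Set.Icc 0 π))
    (hunit : ∀ t ∈ Set.Icc (0:ℝ) π, ‖c t‖ = 1)
    (hd1 : ∀ t ∈ Set.Icc (0:ℝ) π, L⁻¹ ≤ ‖c' t‖)
    (hd2 : ∀ t ∈ Set.Icc (0:ℝ) π,
      ‖c'' t‖ ^ 2 ≤ L⁻¹ ^ 2 + ((Real.sqrt 2 - 1) / (2 * (Real.exp π - 1))) ^ 2) :
    ∫ t in (0:ℝ)..π, Real.exp (-t) * ‖c'' t + c t‖ ≤
      Real.exp (-π) * (1 - 1 / Real.sqrt 2) :=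
  (stmt_9_general (zero_lt_one.trans_le hL) hL2 hc' hc'' hunit hd1 hd2).2
end

section
/- Let E and F be real inner product spaces, let G be a set of continuous linear maps from E to F, and let σ be a function assigning to each unit vector u ∈ E a vector σ(u) ∈ F, such that ⟨A(u), σ(u)⟩ > 0 for every A ∈ G and every unit vector u ∈ E. Then every element B of the convex hull of G (taken in the space of continuous linear maps from E to F) is injective. -/
open scoped RealInnerProductSpace

theorem pos_of_mem_convexHull {R V β : Type*} [Semiring R] [PartialOrder R]
    [AddCommMonoid V] [Module R V] [AddCommMonoid β] [PartialOrder β]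
    [IsOrderedCancelAddMonoid β] [Module R β] [PosSMulStrictMono R β] {s : Set V}
    (f : V →ₗ[R] β) (hf : ∀ v ∈ s, 0 < f v) {w : V} (hw : w ∈ convexHull R s) : 0 < f w :=
  convexHull_min hf (convex_halfSpace_gt f.isLinear 0) hw

theorem exists_dual_pos_of_forall_norm_eq_one {E F : Type*} [NormedAddCommGroup E]
    [NormedSpace ℝ E] [AddCommMonoid F] [Module ℝ F] {G : Set (E →ₗ[ℝ] F)}
    (h : ∀ u : E, ‖u‖ = 1 → ∃ φ : Module.Dual ℝ F, ∀ A ∈ G, 0 < φ (A u)) {u : E} (hu : u ≠ 0) :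
    ∃ φ : Module.Dual ℝ F, ∀ A ∈ G, 0 < φ (A u) := by
  obtain ⟨φ, hφ⟩ := h (‖u‖⁻¹ • u) (norm_smul_inv_norm (𝕜 := ℝ) hu)
  refine ⟨‖u‖⁻¹ • φ, fun A hA ↦ ?_⟩
  simpa only [map_smul, LinearMap.smul_apply] using hφ A hA

theorem stmt_12_general {R E F : Type*} [CommSemiring R] [PartialOrder R] [IsStrictOrderedRing R]
    [AddCommGroup E] [Module R E] [AddCommMonoid F] [Module R F] (G : Set (E →ₗ[R] F))
    (h : ∀ u : E, u ≠ 0 → ∃ φ : Module.Dual R F, ∀ A ∈ G, 0 < φ (A u)) :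
    ∀ B ∈ convexHull R G, Function.Injective (⇑B) := by
  intro B hB
  refine (injective_iff_map_eq_zero B).2 fun u hBu ↦ by_contra fun hu ↦ ?_
  obtain ⟨φ, hφ⟩ := h u hu
  have hφB : 0 < φ (B u) := pos_of_mem_convexHull (φ ∘ₗ LinearMap.applyₗ u) hφ hB
  exact hφB.ne' (by rw [hBu, map_zero])

theorem stmt_12 {E F : Type*} [NormedAddCommGroup E] [InnerProductSpace ℝ E]
    [NormedAddCommGroup F] [InnerProductSpace ℝ F]
    (G : Set (E →L[ℝ] F)) (σ : E → F)
    (h : ∀ A ∈ G, ∀ u : E, ‖u‖ = 1 → 0 < ⟪A u, σ u⟫) :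
    ∀ B ∈ convexHull ℝ G, Function.Injective (⇑B) := by
  intro B hB
  have hB' : (B : E →ₗ[ℝ] F) ∈ convexHull ℝ (ContinuousLinearMap.coeLM ℝ '' G) :=
    (ContinuousLinearMap.coeLM ℝ).image_convexHull G ▸ Set.mem_image_of_mem _ hB
  exact stmt_12_general _ (fun _ ↦ exists_dual_pos_of_forall_norm_eq_one fun u hu ↦
    ⟨(innerₗ F).flip (σ u), Set.forall_mem_image.2 fun A hA ↦ h A hA u hu⟩) B hB'
end

section
/- Let L ≥ 1 and let σ : ℝⁿ → ℝⁿ be a map such that ‖σ(u)‖ = 1 for every unit vector u and L^{−1}‖u − v‖ ≤ ‖σ(u) − σ(v)‖ ≤ L‖u − v‖ for all unit vectors u, v. Define F̃ : ℝⁿ → ℝⁿ by F̃(v) := ‖v‖·σ(v/‖v‖) for v ≠ 0 and F̃(0) := 0. Then L^{−1}‖u − v‖ ≤ ‖F̃(u) − F̃(v)‖ ≤ L‖u − v‖ for all u, v ∈ ℝⁿ; that is, F̃ is bi-Lipschitz with the same bi-Lipschitz constant L. -/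
/-!
In polar coordinates the squared distance of two vectors splits as
`‖x - y‖² = (‖x‖ - ‖y‖)² + ‖x‖ ‖y‖ ‖x/‖x‖ - y/‖y‖‖²`.
The homogeneous extension of `σ` preserves norms, hence the first summand, and changes the
spherical distance in the second one by a factor between `L⁻¹` and `L`. As `1 ≤ L`, the whole
sum changes by a factor between `L⁻²` and `L²`.
-/

open NormedSpace (normalize norm_normalize norm_smul_normalize normalize_smul_of_pos
  normalize_eq_self_of_norm_eq_one)

section PolarDistance

variable {E G : Type*} [NormedAddCommGroup E] [InnerProductSpace ℝ E]
  [NormedAddCommGroup G] [InnerProductSpace ℝ G]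

theorem norm_sub_sq_eq_add_norm_normalize_sub_sq (x y : E) :
    ‖x - y‖ ^ 2 = (‖x‖ - ‖y‖) ^ 2 + ‖x‖ * ‖y‖ * ‖normalize x - normalize y‖ ^ 2 := by
  rcases eq_or_ne x 0 with rfl | hx
  · simp
  rcases eq_or_ne y 0 with rfl | hy
  · simp
  have inner_eq : inner ℝ x y = ‖x‖ * ‖y‖ * inner ℝ (normalize x) (normalize y) := by
    conv_lhs => rw [← norm_smul_normalize x, ← norm_smul_normalize y]
    rw [real_inner_smul_left, real_inner_smul_right, mul_assoc]
  rw [norm_sub_sq_real, norm_sub_sq_real, norm_normalize hx, norm_normalize hy, inner_eq]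
  ring

theorem norm_sub_le_mul_norm_sub_of_normalize {L : ℝ} (hL : 1 ≤ L) {x y : E} {x' y' : G}
    (hx : ‖x'‖ = ‖x‖) (hy : ‖y'‖ = ‖y‖)
    (h : x ≠ 0 → y ≠ 0 → ‖normalize x' - normalize y'‖ ≤ L * ‖normalize x - normalize y‖) :
    ‖x' - y'‖ ≤ L * ‖x - y‖ := by
  have radial : (‖x‖ - ‖y‖) ^ 2 ≤ L ^ 2 * (‖x‖ - ‖y‖) ^ 2 :=
    le_mul_of_one_le_left (sq_nonneg _) (one_le_pow₀ hL)
  have spherical : ‖x‖ * ‖y‖ * ‖normalize x' - normalize y'‖ ^ 2 ≤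
      ‖x‖ * ‖y‖ * (L * ‖normalize x - normalize y‖) ^ 2 := by
    rcases eq_or_ne x 0 with rfl | hx₀
    · simp
    rcases eq_or_ne y 0 with rfl | hy₀
    · simp
    gcongr
    exact h hx₀ hy₀
  refine le_of_sq_le_sq ?_ (by positivity)
  calc ‖x' - y'‖ ^ 2
      = (‖x‖ - ‖y‖) ^ 2 + ‖x‖ * ‖y‖ * ‖normalize x' - normalize y'‖ ^ 2 := by
        rw [norm_sub_sq_eq_add_norm_normalize_sub_sq, hx, hy]
    _ ≤ L ^ 2 * (‖x‖ - ‖y‖) ^ 2 + ‖x‖ * ‖y‖ * (L * ‖normalize x - normalize y‖) ^ 2 :=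
        add_le_add radial spherical
    _ = (L * ‖x - y‖) ^ 2 := by
        rw [mul_pow L ‖x - y‖, norm_sub_sq_eq_add_norm_normalize_sub_sq x y]
        ring

end PolarDistance

section HomogeneousExtension

variable {E G : Type*} [NormedAddCommGroup E] [NormedSpace ℝ E]
  [NormedAddCommGroup G] [NormedSpace ℝ G] {σ : E → G}

/-- The positively homogeneous extension `v ↦ ‖v‖ • σ (v / ‖v‖)` of the restriction of `σ` to the
unit sphere. At `v = 0` the factor `‖v‖` makes it `0`, whatever the value of `σ 0`. -/
noncomputable def homogeneousExtension (σ : E → G) (v : E) : G :=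
  ‖v‖ • σ (normalize v)

theorem eq_homogeneousExtension {F : E → G} (hF0 : F 0 = 0)
    (hF : ∀ v, v ≠ 0 → F v = ‖v‖ • σ (‖v‖⁻¹ • v)) : F = homogeneousExtension σ := by
  funext v
  rcases eq_or_ne v 0 with rfl | hv
  · simp [homogeneousExtension, hF0]
  · exact hF v hv

theorem norm_homogeneousExtension (hσ : ∀ u, ‖u‖ = 1 → ‖σ u‖ = 1) (v : E) :
    ‖homogeneousExtension σ v‖ = ‖v‖ := by
  rcases eq_or_ne v 0 with rfl | hv
  · simp [homogeneousExtension]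
  · rw [homogeneousExtension, norm_smul, norm_norm, hσ _ (norm_normalize hv), mul_one]

theorem normalize_homogeneousExtension (hσ : ∀ u, ‖u‖ = 1 → ‖σ u‖ = 1) {v : E} (hv : v ≠ 0) :
    normalize (homogeneousExtension σ v) = σ (normalize v) := by
  rw [homogeneousExtension, normalize_smul_of_pos (norm_pos_iff.2 hv),
    normalize_eq_self_of_norm_eq_one (hσ _ (norm_normalize hv))]

end HomogeneousExtension

section BiLipschitz

variable {E G : Type*} [NormedAddCommGroup E] [InnerProductSpace ℝ E]
  [NormedAddCommGroup G] [InnerProductSpace ℝ G] {L : ℝ} {σ : E → G}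

theorem norm_homogeneousExtension_sub_le (hL : 1 ≤ L) (hσ1 : ∀ u, ‖u‖ = 1 → ‖σ u‖ = 1)
    (hσ : ∀ u v, ‖u‖ = 1 → ‖v‖ = 1 → ‖σ u - σ v‖ ≤ L * ‖u - v‖) (u v : E) :
    ‖homogeneousExtension σ u - homogeneousExtension σ v‖ ≤ L * ‖u - v‖ := by
  refine norm_sub_le_mul_norm_sub_of_normalize hL (norm_homogeneousExtension hσ1 u)
    (norm_homogeneousExtension hσ1 v) fun hu hv => ?_
  rw [normalize_homogeneousExtension hσ1 hu, normalize_homogeneousExtension hσ1 hv]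
  exact hσ _ _ (norm_normalize hu) (norm_normalize hv)

theorem norm_sub_le_mul_norm_homogeneousExtension_sub (hL : 1 ≤ L)
    (hσ1 : ∀ u, ‖u‖ = 1 → ‖σ u‖ = 1)
    (hσ : ∀ u v, ‖u‖ = 1 → ‖v‖ = 1 → ‖u - v‖ ≤ L * ‖σ u - σ v‖) (u v : E) :
    ‖u - v‖ ≤ L * ‖homogeneousExtension σ u - homogeneousExtension σ v‖ := by
  have ne_zero {w : E} (hw : homogeneousExtension σ w ≠ 0) : w ≠ 0 := by
    rwa [← norm_ne_zero_iff, norm_homogeneousExtension hσ1, norm_ne_zero_iff] at hw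
  refine norm_sub_le_mul_norm_sub_of_normalize hL (norm_homogeneousExtension hσ1 u).symm
    (norm_homogeneousExtension hσ1 v).symm fun hu hv => ?_
  rw [normalize_homogeneousExtension hσ1 (ne_zero hu),
    normalize_homogeneousExtension hσ1 (ne_zero hv)]
  exact hσ _ _ (norm_normalize (ne_zero hu)) (norm_normalize (ne_zero hv))

theorem stmt_13_general (hL : 1 ≤ L) (hσ1 : ∀ u, ‖u‖ = 1 → ‖σ u‖ = 1)
    (hσ : ∀ u v, ‖u‖ = 1 → ‖v‖ = 1 →
      L⁻¹ * ‖u - v‖ ≤ ‖σ u - σ v‖ ∧ ‖σ u - σ v‖ ≤ L * ‖u - v‖) (u v : E) :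
    L⁻¹ * ‖u - v‖ ≤ ‖homogeneousExtension σ u - homogeneousExtension σ v‖ ∧
      ‖homogeneousExtension σ u - homogeneousExtension σ v‖ ≤ L * ‖u - v‖ := by
  have hL₀ : 0 < L := zero_lt_one.trans_le hL
  simp only [inv_mul_le_iff₀ hL₀] at hσ ⊢
  exact ⟨norm_sub_le_mul_norm_homogeneousExtension_sub hL hσ1
      (fun u v hu hv => (hσ u v hu hv).1) u v,
    norm_homogeneousExtension_sub_le hL hσ1 (fun u v hu hv => (hσ u v hu hv).2) u v⟩

end BiLipschitz

theorem stmt_13 {n : ℕ} (L : ℝ) (hL : 1 ≤ L)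
    (σ : EuclideanSpace ℝ (Fin n) → EuclideanSpace ℝ (Fin n))
    (hσ1 : ∀ u : EuclideanSpace ℝ (Fin n), ‖u‖ = 1 → ‖σ u‖ = 1)
    (hσ : ∀ u v : EuclideanSpace ℝ (Fin n), ‖u‖ = 1 → ‖v‖ = 1 →
      L⁻¹ * ‖u - v‖ ≤ ‖σ u - σ v‖ ∧ ‖σ u - σ v‖ ≤ L * ‖u - v‖)
    (F : EuclideanSpace ℝ (Fin n) → EuclideanSpace ℝ (Fin n))
    (hF0 : F 0 = 0)
    (hF : ∀ v : EuclideanSpace ℝ (Fin n), v ≠ 0 → F v = ‖v‖ • σ (‖v‖⁻¹ • v)) :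
    ∀ u v : EuclideanSpace ℝ (Fin n),
      L⁻¹ * ‖u - v‖ ≤ ‖F u - F v‖ ∧ ‖F u - F v‖ ≤ L * ‖u - v‖ := by
  obtain rfl := eq_homogeneousExtension hF0 hF
  exact stmt_13_general hL hσ1 hσ
end

section
/- Let M be a nonempty, connected, path-connected and locally path-connected topological space, and let F : M → M be a covering map that is homotopic to the identity map of M. Then F is injective; consequently F is a homeomorphism of M onto itself. -/
/-!
The identity lifts `F` through `F`, so the homotopy lifting property turns a homotopy from `F` to
`id` into a lift of `id` through `F`, that is, a continuous section `s` of `F`. Then `s ∘ F` and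
`id` are two lifts of `F` which agree on the image of `s`; as `M` is connected, they are equal.
-/

open Function

section

variable {A E X : Type*} [TopologicalSpace A] [TopologicalSpace E] [TopologicalSpace X] {p : E → X}

theorem exists_lift_of_homotopic_of_isCoveringMap (hp : IsCoveringMap p) {f : C(A, E)} {g : C(A, X)}
    (h : (ContinuousMap.comp ⟨p, hp.continuous⟩ f).Homotopic g) : ∃ f' : C(A, E), p ∘ f' = g := by
  obtain ⟨H⟩ := h
  let G := hp.liftHomotopy H.toContinuousMap f H.apply_zero
  have p_comp_G : p ∘ G = H := hp.liftHomotopy_lifts H.toContinuousMap f H.apply_zero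
  refine ⟨G.comp ((ContinuousMap.const A 1).prodMk (.id A)), funext fun a ↦ ?_⟩
  exact (congr_fun p_comp_G (1, a)).trans (H.apply_one a)

theorem leftInverse_of_rightInverse_of_isSeparatedMap [PreconnectedSpace E]
    (hsep : IsSeparatedMap p) (hinj : IsLocallyInjective p) (hp : Continuous p) {s : X → E}
    (hs : Continuous s) (hps : RightInverse s p) : LeftInverse s p := by
  intro e
  have lifts_eq : p ∘ (s ∘ p) = p ∘ id := funext fun e' ↦ hps (p e')
  have agree : (s ∘ p) (s (p e)) = id (s (p e)) := congrArg s (hps (p e))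
  exact congr_fun (hsep.eq_of_comp_eq hinj (hs.comp hp) continuous_id lifts_eq _ agree) e

theorem isHomeomorph_of_isSeparatedMap_of_rightInverse [PreconnectedSpace E]
    (hsep : IsSeparatedMap p) (hinj : IsLocallyInjective p) (hp : Continuous p) {s : X → E}
    (hs : Continuous s) (hps : RightInverse s p) : IsHomeomorph p :=
  isHomeomorph_iff_exists_inverse.mpr
    ⟨hp, s, leftInverse_of_rightInverse_of_isSeparatedMap hsep hinj hp hs hps, hps, hs⟩

theorem stmt_18_general [PreconnectedSpace E] (hp : IsCoveringMap p) (f : C(X, E))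
    (h : (ContinuousMap.comp ⟨p, hp.continuous⟩ f).Homotopic (ContinuousMap.id X)) :
    IsHomeomorph p := by
  obtain ⟨s, hps⟩ := exists_lift_of_homotopic_of_isCoveringMap hp h
  exact isHomeomorph_of_isSeparatedMap_of_rightInverse hp.isSeparatedMap
    hp.isLocalHomeomorph.isLocallyInjective hp.continuous s.continuous (congr_fun hps)

end

theorem stmt_18 {M : Type*} [TopologicalSpace M] [Nonempty M] [ConnectedSpace M]
    [PathConnectedSpace M] [LocallyPathConnectedSpace M]
    (F : M → M) (hF : IsCoveringMap F) (hsurj : Function.Surjective F)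
    (hhom : ContinuousMap.Homotopic ⟨F, hF.continuous⟩ (ContinuousMap.id M)) :
    Function.Injective F ∧ IsHomeomorph F :=
  have hhomeo : IsHomeomorph F := stmt_18_general hF (ContinuousMap.id M) hhom
  ⟨hhomeo.injective, hhomeo⟩
end
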